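/- Let F denote the Fibonacci sequence with F_1 = F_2 = 1, and let h : ℤ × ℤ → ℤ × ℤ be the map h(m,n) = (m−n, 2n−m). For coprime integers m > n ≥ 1, there exists a natural number i such that the i-th iterate of h applied to (m,n) equals (1,1) or (2,1) if and only if there exists an integer j ≥ 1 with (m,n) = (F_{j+1}, F_j). -/

import Mathlib

/-!
The map `h` is the square of the inverse of the Fibonacci shift `(a, b) ↦ (b + a, a)`, and `(2, 1)`
is the shift of `(1, 1)`. Hence `(m, n)` reaches `(1, 1)` or `(2, 1)` under `h` exactly when an even
or an odd power of the shift, respectively, carries `(1, 1)` to `(m, n)`; these powers produce the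
consecutive Fibonacci pairs.
-/

/-- The Fibonacci shift: it carries `(u (k + 1), u k)` to `(u (k + 2), u (k + 1))` whenever
`u (k + 2) = u k + u (k + 1)`. For commutative groups it is the action of the matrix
`!![1, 1; 1, 0]`. -/
def fibShift (G : Type*) [AddGroup G] : Equiv.Perm (G × G) where
  toFun p := (p.2 + p.1, p.1)
  invFun p := (p.2, p.1 - p.2)
  left_inv p := by simp
  right_inv p := by simp

theorem fibShift_apply {G : Type*} [AddGroup G] (a b : G) :
    fibShift G (a, b) = (b + a, a) :=
  rfl

theorem fibShift_inv_apply {G : Type*} [AddGroup G] (a b : G) :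
    (fibShift G)⁻¹ (a, b) = (b, a - b) :=
  rfl

theorem coe_fibShift_inv_sq (R : Type*) [Ring R] :
    ⇑((fibShift R)⁻¹ ^ 2) = fun p : R × R ↦ (p.1 - p.2, 2 * p.2 - p.1) := by
  funext ⟨a, b⟩
  have second_coord : b - (a - b) = 2 * b - a := by rw [two_mul]; abel
  simp only [sq, Equiv.Perm.mul_apply, fibShift_inv_apply, second_coord]

theorem fibShift_pow_apply_one_one (R : Type*) [AddGroupWithOne R] (k : ℕ) :
    (fibShift R ^ k) (1, 1) = ((Nat.fib (k + 2) : R), (Nat.fib (k + 1) : R)) := by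
  induction k with
  | zero => simp
  | succ k ih =>
    rw [pow_succ', Equiv.Perm.mul_apply, ih, fibShift_apply, ← Nat.cast_add, ← Nat.fib_add_two]

theorem exists_inv_sq_pow_apply_eq_or_iff {α : Type*} (f : Equiv.Perm α) (x y : α) :
    (∃ i : ℕ, ((f⁻¹ ^ 2) ^ i) x = y ∨ ((f⁻¹ ^ 2) ^ i) x = f y) ↔
      ∃ k : ℕ, x = (f ^ k) y := by
  have undo_iterate (i : ℕ) (z : α) : ((f⁻¹ ^ 2) ^ i) x = z ↔ x = (f ^ (2 * i)) z := by
    rw [← pow_mul, inv_pow, Equiv.Perm.inv_eq_iff_eq]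
  simp only [undo_iterate, ← Equiv.Perm.mul_apply, ← pow_succ]
  constructor
  · rintro ⟨i, even | odd⟩
    exacts [⟨2 * i, even⟩, ⟨2 * i + 1, odd⟩]
  · rintro ⟨k, hk⟩
    obtain ⟨i, rfl | rfl⟩ := k.even_or_odd'
    exacts [⟨i, .inl hk⟩, ⟨i, .inr hk⟩]

theorem stmt_5_general {R : Type*} [Ring R] (m n : R) :
    (∃ i : ℕ,
        (fun p : R × R ↦ (p.1 - p.2, 2 * p.2 - p.1))^[i] (m, n) = (1, 1) ∨
        (fun p : R × R ↦ (p.1 - p.2, 2 * p.2 - p.1))^[i] (m, n) = (2, 1)) ↔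
      ∃ j : ℕ, 1 ≤ j ∧ (m, n) = ((Nat.fib (j + 1) : R), (Nat.fib j : R)) := by
  have two_one_eq : ((2 : R), (1 : R)) = fibShift R (1, 1) := by
    rw [fibShift_apply, one_add_one_eq_two]
  rw [← coe_fibShift_inv_sq, two_one_eq]
  simp only [Equiv.Perm.iterate_eq_pow]
  rw [exists_inv_sq_pow_apply_eq_or_iff]
  simp only [fibShift_pow_apply_one_one]
  constructor
  · rintro ⟨k, hk⟩
    exact ⟨k + 1, k.succ_pos, hk⟩
  · rintro ⟨j, one_le_j, hj⟩
    obtain ⟨k, rfl⟩ := Nat.exists_eq_add_of_le' one_le_j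
    exact ⟨k, hj⟩

/-- For coprime integers `m > n ≥ 1`, some iterate of `h(m,n) = (m-n, 2n-m)`
reaches `(1,1)` or `(2,1)` iff `(m,n)` is a Fibonacci pair `(F (j+1), F j)`, `j ≥ 1`. -/
theorem stmt_5 (m n : ℤ) (hmn : m > n) (hn : n ≥ 1) (hcop : IsCoprime m n) :
    (∃ i : ℕ,
        (fun p : ℤ × ℤ => (p.1 - p.2, 2 * p.2 - p.1))^[i] (m, n) = (1, 1) ∨
        (fun p : ℤ × ℤ => (p.1 - p.2, 2 * p.2 - p.1))^[i] (m, n) = (2, 1)) ↔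
      ∃ j : ℕ, 1 ≤ j ∧ (m, n) = ((Nat.fib (j + 1) : ℤ), (Nat.fib j : ℤ)) :=
  stmt_5_general m n
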